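/- Commutator relations on W(ϖ1) (part of the verification that the given operators define the fundamental representation of type G2^(1)): as linear endomorphisms of V one has [e_i, f_j] = 0 for all i ≠ j in {0,1,2}, and for each i ∈ {0,1,2} the operator h_i := [e_i, f_i] acts diagonally with h_i(b) = wt(b)_i · b for every basis vector b (where wt(b)_i is the i-th coordinate of wt(b)). -/

import Mathlib

noncomputable section

/-- The 15-dimensional space: basis indices 0..5 = b1..b6, 6..11 = b1'..b6',
12 = c1, 13 = c2, 14 = u. -/
abbrev VC := Fin 15 → ℂ

def f0op (v : VC) : VC :=
  ![v 13 + 2*v 14, v 11, v 9, v 8, 0, v 7, 0, 0, 0, 0, 0, 0, 0, 0, v 6]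

def f1op (v : VC) : VC :=
  ![0, v 0, 0, 0, v 3, 0, v 7, 0, 0, v 10, 0, 3*v 12 + 2*v 13 + v 14, 0, v 5, 0]

def f2op (v : VC) : VC :=
  ![0, 0, v 1, 2*v 2, 0, 3*v 3, 0, 3*v 8, 2*v 9, v 11, 2*v 12 + v 13, 0, v 4, 0, 0]

def e0op (v : VC) : VC :=
  ![0, 0, 0, 0, 0, 0, v 13 + 2*v 14, v 5, v 3, v 2, 0, v 1, 0, 0, v 0]

def e1op (v : VC) : VC :=
  ![v 1, 0, 0, v 4, 0, 3*v 12 + 2*v 13 + v 14, 0, v 6, 0, 0, v 9, 0, 0, v 11, 0]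

def e2op (v : VC) : VC :=
  ![0, 3*v 2, 2*v 3, v 5, 2*v 12 + v 13, 0, 0, 0, v 7, 2*v 8, 0, 3*v 9, v 10, 0, 0]

def wtv : Fin 15 → Fin 3 → ℤ :=
  ![![-2,1,0], ![-1,-1,3], ![-1,0,1], ![-1,1,-1], ![0,-1,2], ![-1,2,-3],
    ![2,-1,0], ![1,1,-3], ![1,0,-1], ![1,-1,1], ![0,1,-2], ![1,-2,3],
    ![0,0,0], ![0,0,0], ![0,0,0]]

end

noncomputable section

def eops : Fin 3 → (VC → VC) := ![e0op, e1op, e2op]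

def fops : Fin 3 → (VC → VC) := ![f0op, f1op, f2op]

end

/-!
Exchanging `bᵢ` with `bᵢ'` is an involution of the space that conjugates each `eᵢ` into `fᵢ`.
It therefore carries `[eᵢ, fⱼ] = 0` to `[eⱼ, fᵢ] = 0`, which leaves only the pairs `i < j`. It also
carries `eᵢ fᵢ` to `fᵢ eᵢ`, so each `hᵢ` is determined by the single composite `eᵢ fᵢ`. In this
composite the only off-diagonal terms map the zero weight space to itself and cancel in `hᵢ`,
because the involution fixes that space pointwise.
-/

theorem commute_of_semiconj {α β : Type*} {σ : α → β} {f g : α → α} {f' g' : β → β}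
    (hσ : σ.Surjective) (hf : Function.Semiconj σ f f') (hg : Function.Semiconj σ g g')
    (h : Function.Commute f g) : Function.Commute f' g' := by
  refine hσ.forall.2 fun a ↦ ?_
  rw [← hg, ← hf, h a, hg, hf]

/-- The involution of the index set that exchanges `bᵢ` with `bᵢ'` and fixes `c₁`, `c₂`, `u`. -/
def primeSwap : Fin 15 → Fin 15 :=
  ![6, 7, 8, 9, 10, 11, 0, 1, 2, 3, 4, 5, 12, 13, 14]

theorem primeSwap_involutive : Function.Involutive primeSwap := by
  unfold Function.Involutive
  decide

/-- The Chevalley involution, realised on `VC` by exchanging the basis vectors `bᵢ` and `bᵢ'`;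
conjugation by it interchanges `eᵢ` and `fᵢ`. -/
def chevalley (v : VC) : VC := v ∘ primeSwap

theorem chevalley_involutive : Function.Involutive chevalley := fun v ↦ by
  rw [chevalley, chevalley, Function.comp_assoc, primeSwap_involutive.comp_self, Function.comp_id]

theorem semiconj_chevalley_fops_eops (i : Fin 3) :
    Function.Semiconj chevalley (fops i) (eops i) := by
  intro v
  ext k
  fin_cases i <;> fin_cases k <;> rfl

theorem semiconj_chevalley_eops_fops (i : Fin 3) :
    Function.Semiconj chevalley (eops i) (fops i) :=
  (semiconj_chevalley_fops_eops i).inverse_left chevalley_involutive.leftInverse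
    chevalley_involutive.rightInverse

theorem fops_eops_eq_chevalley_conj (i : Fin 3) (v : VC) :
    fops i (eops i v) = chevalley (eops i (fops i (chevalley v))) := by
  rw [semiconj_chevalley_eops_fops, semiconj_chevalley_fops_eops, chevalley_involutive]

theorem commute_e0op_f1op : Function.Commute e0op f1op := fun v ↦ by
  simp [e0op, f1op]

theorem commute_e0op_f2op : Function.Commute e0op f2op := fun v ↦ by
  simp [e0op, f2op]

theorem commute_e1op_f2op : Function.Commute e1op f2op := fun v ↦ by
  simp [e1op, f2op]

theorem commute_eops_fops_swap {i j : Fin 3} (h : Function.Commute (eops i) (fops j)) :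
    Function.Commute (eops j) (fops i) :=
  commute_of_semiconj chevalley_involutive.surjective (semiconj_chevalley_fops_eops j)
    (semiconj_chevalley_eops_fops i) h.symm

theorem commute_eops_fops : ∀ {i j : Fin 3}, i ≠ j → Function.Commute (eops i) (fops j)
  | 0, 1, _ => commute_e0op_f1op
  | 0, 2, _ => commute_e0op_f2op
  | 1, 2, _ => commute_e1op_f2op
  | 1, 0, _ => commute_eops_fops_swap commute_e0op_f1op
  | 2, 0, _ => commute_eops_fops_swap commute_e0op_f2op
  | 2, 1, _ => commute_eops_fops_swap commute_e1op_f2op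
  | 0, 0, h | 1, 1, h | 2, 2, h => absurd rfl h

theorem eops_zero_fops_zero (v : VC) :
    eops 0 (fops 0 v) =
      ![0, 0, 0, 0, 0, 0, 2 * v 6, v 7, v 8, v 9, 0, v 11, 0, 0, v 13 + 2 * v 14] := by
  simp [eops, fops, e0op, f0op]

theorem eops_one_fops_one (v : VC) :
    eops 1 (fops 1 v) =
      ![v 0, 0, 0, v 3, 0, 2 * v 5, 0, v 7, 0, 0, v 10, 0, 0, 3 * v 12 + 2 * v 13 + v 14, 0] := by
  simp [eops, fops, e1op, f1op]

theorem eops_two_fops_two (v : VC) :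
    eops 2 (fops 2 v) =
      ![0, 3 * v 1, 2 * (2 * v 2), 3 * v 3, 2 * v 4, 0, 0, 0, 3 * v 8, 2 * (2 * v 9), 0, 3 * v 11,
        2 * v 12 + v 13, 0, 0] := by
  simp [eops, fops, e2op, f2op]

theorem eops_fops_sub_fops_eops_apply (i : Fin 3) (v : VC) (k : Fin 15) :
    eops i (fops i v) k - fops i (eops i v) k = wtv k i * v k := by
  rw [fops_eops_eq_chevalley_conj]
  match i with
  | 0 =>
    simp only [eops_zero_fops_zero, chevalley, Function.comp_apply]
    fin_cases k <;> simp [primeSwap, wtv]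
  | 1 =>
    simp only [eops_one_fops_one, chevalley, Function.comp_apply]
    fin_cases k <;> simp [primeSwap, wtv]
  | 2 =>
    simp only [eops_two_fops_two, chevalley, Function.comp_apply]
    fin_cases k <;> simp [primeSwap, wtv] <;> ring

/-- Commutator relations on `W(ϖ1)`: `[e_i, f_j] = 0` for `i ≠ j`, and
`h_i := [e_i, f_i]` acts diagonally with eigenvalue `wt(b)_i` on each basis vector. -/
theorem commutator_relations :
    (∀ i j : Fin 3, i ≠ j → ∀ v : VC, eops i (fops j v) - fops j (eops i v) = 0) ∧
    (∀ i : Fin 3, ∀ v : VC, ∀ k : Fin 15,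
      eops i (fops i v) k - fops i (eops i v) k = (wtv k i : ℂ) * v k) := by
  constructor
  · intro i j hij v
    exact sub_eq_zero.2 (commute_eops_fops hij v)
  · exact eops_fops_sub_fops_eops_apply
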